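/- Let Γ be a finitely generated group with an infinite abelian normal subgroup A which is generated by one element as a Γ-module (i.e., A is the normal closure of a single element), and let (Γⱼ) be a chain of finite index subgroups with trivial intersection. Suppose d(Γ) = d. For each j set Mⱼ = A ∩ Γⱼ, aⱼ = [Γ : AΓⱼ], bⱼ = [A : Mⱼ]. Then d(Γⱼ) ≤ aⱼ·d + aⱼ + (2d·aⱼ + 1)·log₂(bⱼ), and consequently (d(Γⱼ)-1)/[Γ : Γⱼ] ≤ d/bⱼ + (1 + (2d+1)log₂ bⱼ)/bⱼ → 0, so RG(Γ,(Γⱼ)) = 0. -/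

import Mathlib

open Filter

/-- `d G` is the minimal number of generators of the group `G`. -/
noncomputable def d (G : Type*) [Group G] : ℕ :=
  sInf {n | ∃ S : Finset G, S.card = n ∧ Subgroup.closure (S : Set G) = ⊤}

/-!
Conjugation makes `A` a module over `ℤ[Γ]`, and `Γⱼ` is generated by `aⱼ d` elements `T` generating
it modulo `A ∩ Γⱼ`, together with generators of `A ∩ Γⱼ` as a `T`-module. By Schreier's bound `T`
comes from generators of `A Γⱼ`, and conjugating a generator of `A` by a transversal of `A Γⱼ`
gives `aⱼ` generators of `A` over `T`. It remains to generate a submodule `M` of index `b` in a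
module generated by `X` over the operators `S`: choose `log₂ b` elements `Y` generating `A / M` as a
group, correct the elements of `X` and of `S Y` by elements of `⟨Y⟩` so that they fall into `M`, and
add generators of the group `⟨Y⟩ ∩ M`. Finally `[Γ : Γⱼ] = aⱼ bⱼ`, and `bⱼ → ∞` because `A` is
infinite, so the bound on `d(Γⱼ)` is negligible against the index.
-/

open Subgroup

section AbelianGenerators

theorem exists_finset_span_eq_of_le_span {R M : Type*} [CommRing R] [IsDomain R]
    [IsPrincipalIdealRing R] [AddCommGroup M] [Module R M] (Y : Finset M) {N : Submodule R M}
    (hN : N ≤ Submodule.span R Y) :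
    ∃ E : Finset M, E.card ≤ Y.card ∧ Submodule.span R (E : Set M) = N := by
  let φ : (Y → R) →ₗ[R] M := Fintype.linearCombination R ((↑) : Y → M)
  have hmap : (N.comap φ).map φ = N := by
    refine Submodule.map_comap_eq_self ?_
    rwa [Fintype.range_linearCombination, Subtype.range_coe]
  have hfg : (N.comap φ).FG := IsNoetherian.noetherian _
  obtain ⟨E, hcard, hspan⟩ := (hmap ▸ hfg.map φ : N.FG).exists_span_finset_card_eq_spanFinrank
  refine ⟨E, ?_, hspan⟩
  calc E.card = ((N.comap φ).map φ).spanFinrank := by rw [hcard, hmap]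
    _ ≤ (N.comap φ).spanFinrank := Submodule.spanFinrank_map_le_of_fg φ hfg
    _ = Module.finrank R (N.comap φ) := by
      rw [Module.finrank_eq_spanFinrank_of_free, Submodule.spanFinrank_top]
    _ ≤ Module.finrank R (Y → R) := Submodule.finrank_le _
    _ = Y.card := by rw [Module.finrank_fintype_fun_eq_card, Fintype.card_coe]

theorem exists_finset_closure_eq_of_le_closure {A : Type*} [CommGroup A] (Y : Finset A)
    {H : Subgroup A} (hH : H ≤ closure (Y : Set A)) :
    ∃ E : Finset A, E.card ≤ Y.card ∧ closure (E : Set A) = H := by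
  have hspan : H.toAddSubgroup.toIntSubmodule ≤
      Submodule.span ℤ (Y.map Additive.ofMul.toEmbedding : Set (Additive A)) := by
    change toAddSubgroup H ≤ (Submodule.span ℤ _).toAddSubgroup
    rw [Submodule.span_int_eq_addSubgroupClosure, Finset.coe_map, Equiv.coe_toEmbedding,
      Equiv.image_eq_preimage_symm, Additive.ofMul_symm_eq, ← toAddSubgroup_closure]
    exact toAddSubgroup.monotone hH
  obtain ⟨E, hcard, hE⟩ := exists_finset_span_eq_of_le_span _ hspan
  refine ⟨E.map Additive.toMul.toEmbedding, by simpa using hcard, toAddSubgroup.injective ?_⟩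
  rw [toAddSubgroup_closure, Finset.coe_map, Equiv.coe_toEmbedding,
    Equiv.preimage_image, ← Submodule.span_int_eq_addSubgroupClosure, hE]
  rfl

theorem exists_finset_closure_sup_eq_top {G : Type*} [Group G] (M : Subgroup G) [M.FiniteIndex] :
    ∃ Y : Finset G, Y.card ≤ Nat.log 2 M.index ∧ closure (Y : Set G) ⊔ M = ⊤ := by
  classical
  induction hn : M.index using Nat.strong_induction_on generalizing M with
  | _ n ih =>
  subst hn
  obtain rfl | hM := eq_or_ne M ⊤
  · exact ⟨∅, by simp, by simp⟩
  obtain ⟨y, hy⟩ : ∃ y, y ∉ M := by simpa [eq_top_iff'] using hM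
  have hlt : M < M ⊔ zpowers y := by simpa using hy
  have : (M ⊔ zpowers y).FiniteIndex := finiteIndex_of_le hlt.le
  obtain ⟨Y, hcard, hY⟩ := ih _ (index_strictAnti hlt) _ rfl
  have hindex : (M ⊔ zpowers y).index * 2 ≤ M.index := by
    obtain ⟨k, hk⟩ := index_dvd_of_le hlt.le
    have hk2 : 1 < k := lt_of_mul_lt_mul_left (by simpa [← hk] using index_strictAnti hlt)
      (Nat.zero_le (M ⊔ zpowers y).index)
    rw [hk]
    exact Nat.mul_le_mul_left _ hk2
  refine ⟨insert y Y, ?_, ?_⟩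
  · calc (insert y Y).card ≤ Nat.log 2 (M ⊔ zpowers y).index + 1 :=
          (Finset.card_insert_le _ _).trans (Nat.succ_le_succ hcard)
      _ = Nat.log 2 ((M ⊔ zpowers y).index * 2) :=
          (Nat.log_mul_base one_lt_two FiniteIndex.index_ne_zero).symm
      _ ≤ Nat.log 2 M.index := Nat.log_mono_right hindex
  · rw [Finset.coe_insert, Set.insert_eq, Subgroup.closure_union, ← zpowers_eq_closure,
      sup_comm (zpowers y), sup_assoc, sup_comm (zpowers y), hY]

end AbelianGenerators

section OperatorGroups

variable {A : Type*} [Group A]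

/-- The subgroup of `A` generated by `X` as a group with operators `S`, that is, the smallest
subgroup containing `X` and stable under every endomorphism in `S`. When `A` is abelian and `S`
comes from generators and their inverses of a group `G` acting on `A`, this is the `ℤG`-submodule
spanned by `X`. -/
def operatorClosure (S : Set (A →* A)) (X : Set A) : Subgroup A :=
  sInf {B | X ⊆ B ∧ ∀ f ∈ S, B ≤ B.comap f}

theorem subset_operatorClosure (S : Set (A →* A)) (X : Set A) :
    X ⊆ operatorClosure S X :=
  fun _ hx => mem_sInf.2 fun _ hB => hB.1 hx

theorem operatorClosure_le_comap {S : Set (A →* A)} (X : Set A) {f : A →* A} (hf : f ∈ S) :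
    operatorClosure S X ≤ (operatorClosure S X).comap f :=
  fun _ ha => mem_sInf.2 fun B hB => hB.2 f hf (mem_sInf.1 ha B hB)

theorem operatorClosure_le {S : Set (A →* A)} {X : Set A} {B : Subgroup A} (hX : X ⊆ B)
    (hB : ∀ f ∈ S, B ≤ B.comap f) : operatorClosure S X ≤ B :=
  sInf_le ⟨hX, hB⟩

theorem operatorClosure_le_sup_closure {S : Set (A →* A)} {X Y : Set A} {N : Subgroup A}
    (hN : ∀ f ∈ S, N ≤ N.comap f) (hX : X ⊆ (N ⊔ closure Y : Subgroup A))
    (hY : ∀ f ∈ S, ∀ y ∈ Y, f y ∈ N ⊔ closure Y) :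
    operatorClosure S X ≤ N ⊔ closure Y :=
  operatorClosure_le hX fun f hf =>
    sup_le ((hN f hf).trans (comap_mono le_sup_left)) ((closure_le _).2 (hY f hf))

theorem exists_finset_operatorClosure_eq {A : Type*} [CommGroup A] (S : Finset (A →* A))
    (X : Finset A) (hX : operatorClosure (S : Set (A →* A)) X = ⊤) (M : Subgroup A)
    [M.FiniteIndex] (hM : ∀ f ∈ S, M ≤ M.comap f) :
    ∃ Z : Finset A, Z.card ≤ X.card + (S.card + 1) * Nat.log 2 M.index ∧
      operatorClosure (S : Set (A →* A)) Z = M := by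
  classical
  obtain ⟨Y, hYcard, hYM⟩ := exists_finset_closure_sup_eq_top M
  obtain ⟨E, hEcard, hE⟩ := exists_finset_closure_eq_of_le_closure Y
    (inf_le_left : closure (Y : Set A) ⊓ M ≤ _)
  have hcorrection (a : A) : ∃ w ∈ closure (Y : Set A), a / w ∈ M := by
    obtain ⟨w, hw, m, hm, rfl⟩ := mem_sup.1 (hYM ▸ mem_top a : a ∈ closure (Y : Set A) ⊔ M)
    exact ⟨w, hw, by simpa using hm⟩
  choose w hwY hwM using hcorrection
  set V := X ∪ Finset.image₂ (fun f y => f y) S Y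
  set Z := V.image (fun a => a / w a) ∪ E
  set N := operatorClosure (S : Set (A →* A)) Z
  have hNM : N ≤ M := by
    refine operatorClosure_le (fun z hz => ?_) hM
    rcases Finset.mem_union.1 hz with hz | hz
    · obtain ⟨a, -, rfl⟩ := Finset.mem_image.1 hz
      exact hwM a
    · exact (hE ▸ subset_closure hz : z ∈ closure (Y : Set A) ⊓ M).2
  have hVN (a : A) (ha : a ∈ V) : a ∈ N ⊔ closure (Y : Set A) := by
    have haN : a / w a ∈ N := subset_operatorClosure _ _
      (Finset.mem_union_left _ (Finset.mem_image_of_mem _ ha))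
    simpa using mul_mem_sup haN (hwY a)
  have htop : N ⊔ closure (Y : Set A) = ⊤ := top_le_iff.1 <| hX ▸ operatorClosure_le_sup_closure
    (fun f hf => operatorClosure_le_comap _ hf) (fun x hx => hVN x (Finset.mem_union_left _ hx))
    fun f hf y hy => hVN _ (Finset.mem_union_right _ (Finset.mem_image₂_of_mem hf hy))
  have hEN : closure (E : Set A) ≤ N := (closure_le _).2 <|
    Set.Subset.trans (Finset.coe_subset.2 Finset.subset_union_right) (subset_operatorClosure _ _)
  refine ⟨Z, ?_, ?_⟩
  · calc Z.card ≤ (X.card + S.card * Y.card) + E.card :=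
          (Finset.card_union_le _ _).trans <| Nat.add_le_add_right (Finset.card_image_le.trans <|
            (Finset.card_union_le _ _).trans <|
              Nat.add_le_add_left (Finset.card_image₂_le _ _ _) _) _
      _ ≤ (X.card + S.card * Y.card) + Y.card := by gcongr
      _ = X.card + (S.card + 1) * Y.card := by ring
      _ ≤ X.card + (S.card + 1) * Nat.log 2 M.index := by gcongr
  · calc N = N ⊔ closure (Y : Set A) ⊓ M := by rw [← hE, sup_eq_left.2 hEN]
      _ = (N ⊔ closure (Y : Set A)) ⊓ M := (sup_inf_assoc_of_le _ hNM).symm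
      _ = M := by rw [htop, top_inf_eq]

end OperatorGroups

section Generators

variable {Γ : Type*} [Group Γ]

theorem exists_finset_normalClosure_le (L : Subgroup Γ) [L.FiniteIndex] (X : Finset Γ) :
    ∃ Y : Finset Γ, Y.card ≤ L.index * X.card ∧ (Y : Set Γ) ⊆ normalClosure (X : Set Γ) ∧
      ∀ B : Subgroup Γ, (Y : Set Γ) ⊆ B → L ≤ normalizer (B : Set Γ) →
        normalClosure (X : Set Γ) ≤ B := by
  classical
  let := L.fintypeQuotientOfFiniteIndex
  refine ⟨Finset.image₂ (fun (q : Γ ⧸ L) x => q.out⁻¹ * x * q.out) Finset.univ X, ?_, ?_, ?_⟩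
  · simpa [index_eq_card] using Finset.card_image₂_le _ Finset.univ X
  · intro y hy
    obtain ⟨q, -, x, hx, rfl⟩ := Finset.mem_image₂.1 hy
    simpa using normalClosure_normal.conj_mem x (subset_normalClosure hx) q.out⁻¹
  · intro B hYB hLB
    refine (closure_le _).2 fun z hz => ?_
    obtain ⟨x, hx, hxz⟩ := Group.mem_conjugatesOfSet_iff.1 hz
    obtain ⟨g, rfl⟩ := isConj_iff.1 hxz
    obtain ⟨k, hk⟩ := QuotientGroup.mk_out_eq_mul L g⁻¹
    have hmem : (g⁻¹ * k)⁻¹ * x * (g⁻¹ * k) ∈ B :=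
      hk ▸ hYB (Finset.mem_image₂_of_mem (Finset.mem_univ _) hx)
    refine (mem_normalizer_iff.1 (hLB (inv_mem k.2)) _).2 ?_
    simpa [mul_assoc] using hmem

theorem exists_finset_closure_sup_inf_eq (A H : Subgroup Γ) [A.Normal]
    [Group.FG (A ⊔ H : Subgroup Γ)] :
    ∃ T : Finset Γ, T.card ≤ Group.rank (A ⊔ H : Subgroup Γ) ∧
      closure (T : Set Γ) ⊔ A ⊓ H = H := by
  classical
  obtain ⟨U, hUcard, hU⟩ := Group.rank_spec (A ⊔ H : Subgroup Γ)
  have hfactor (u : (A ⊔ H : Subgroup Γ)) : ∃ h ∈ H, ∃ a ∈ A, a * h = u := by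
    obtain ⟨a, ha, h, hh, hah⟩ := mem_sup_of_normal_left.1 u.2
    exact ⟨h, hh, a, ha, hah⟩
  choose h hH a haA hah using hfactor
  have hTH : closure (U.image h : Set Γ) ≤ H := by
    rw [closure_le, Finset.coe_image, Set.image_subset_iff]
    exact fun u _ => hH u
  have hsup : A ⊔ H ≤ A ⊔ closure (U.image h : Set Γ) := by
    rw [← subgroupOf_eq_top, ← top_le_iff, ← hU, closure_le]
    intro u hu
    exact mem_subgroupOf.2 (hah u ▸ mul_mem_sup (haA u)
      (subset_closure (Finset.mem_image_of_mem h hu)))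
  refine ⟨U.image h, hUcard ▸ Finset.card_image_le, le_antisymm (sup_le hTH inf_le_right) ?_⟩
  intro g hg
  obtain ⟨a, ha, c, hc, rfl⟩ := mem_sup_of_normal_left.1 (hsup (mem_sup_right hg))
  have haH : a ∈ H := (mul_mem_cancel_right (hTH hc)).1 hg
  exact mul_mem (mem_sup_right ⟨ha, haH⟩) (mem_sup_left hc)

end Generators

section NormalSubgroup

variable {Γ : Type*} [Group Γ]

theorem relIndex_sup_eq_relIndex_of_normal (A H : Subgroup Γ) [A.Normal] :
    H.relIndex (A ⊔ H) = H.relIndex A := by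
  refine (Nat.card_eq_of_bijective (quotientSubgroupOfEmbeddingOfLE H le_sup_left)
    ⟨(quotientSubgroupOfEmbeddingOfLE H _).injective, fun q => ?_⟩).symm
  obtain ⟨g, rfl⟩ := QuotientGroup.mk_surjective q
  obtain ⟨a, ha, h, hh, hah⟩ := mem_sup_of_normal_left.1 g.2
  refine ⟨QuotientGroup.mk ⟨a, ha⟩, ?_⟩
  rw [quotientSubgroupOfEmbeddingOfLE_apply_mk, QuotientGroup.eq, mem_subgroupOf]
  simpa [← hah] using hh

theorem index_sup_mul_relIndex_of_normal (A H : Subgroup Γ) [A.Normal] :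
    (A ⊔ H).index * H.relIndex A = H.index := by
  rw [← relIndex_sup_eq_relIndex_of_normal, mul_comm, relIndex_mul_index le_sup_right]

/-- The endomorphisms of the normal subgroup `A` through which the elements of `T` and their
inverses act by conjugation. A subgroup of `A` is stable under them iff `T` normalizes it. -/
def conjOperators (A : Subgroup Γ) [A.Normal] (T : Set Γ) : Set (A →* A) :=
  (fun t => (MulAut.conjNormal t : A ≃* A).toMonoidHom) '' (T ∪ T⁻¹)

open scoped Pointwise in
theorem exists_finset_coe_eq_conjOperators (A : Subgroup Γ) [A.Normal] (T : Finset Γ) :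
    ∃ S : Finset (A →* A), S.card ≤ 2 * T.card ∧ (S : Set (A →* A)) = conjOperators A T := by
  classical
  refine ⟨(T ∪ T⁻¹).image fun t => (MulAut.conjNormal t : A ≃* A).toMonoidHom, ?_, ?_⟩
  · calc _ ≤ (T ∪ T⁻¹).card := Finset.card_image_le
      _ ≤ T.card + T⁻¹.card := Finset.card_union_le _ _
      _ = 2 * T.card := by rw [Finset.card_inv, two_mul]
  · simp only [conjOperators, Finset.coe_image, Finset.coe_union, Finset.coe_inv]

theorem forall_conjOperators_le_comap_iff {A : Subgroup Γ} [A.Normal] {T : Set Γ}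
    {B : Subgroup A} :
    (∀ f ∈ conjOperators A T, B ≤ B.comap f) ↔
      closure T ≤ normalizer (B.map A.subtype : Set Γ) := by
  constructor
  · intro hB
    have hconj (t : Γ) (ht : t ∈ T ∪ T⁻¹) :
        ∀ b ∈ B.map A.subtype, t * b * t⁻¹ ∈ B.map A.subtype := by
      rintro _ ⟨b, hb, rfl⟩
      exact ⟨_, hB _ (Set.mem_image_of_mem _ ht) hb, MulAut.conjNormal_apply t b⟩
    refine (closure_le _).2 fun t ht => mem_normalizer_iff.2 fun b =>
      ⟨hconj t (.inl ht) b, fun hb => ?_⟩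
    simpa [mul_assoc] using hconj t⁻¹ (.inr (Set.inv_mem_inv.2 ht)) _ hb
  · rintro hB _ ⟨t, ht, rfl⟩ b hb
    have htT : t ∈ closure T := ht.elim (fun h => subset_closure h)
      fun h => inv_mem_iff.1 (subset_closure h)
    have hmem := (mem_normalizer_iff.1 (hB htT) b).1 (mem_map_of_mem A.subtype hb)
    exact (mem_map_iff_mem (K := B) A.subtype_injective).1
      ((MulAut.conjNormal_apply t b).symm ▸ hmem :)

theorem subgroupOf_le_comap_of_mem_conjOperators {A K : Subgroup Γ} [A.Normal] {T : Set Γ}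
    (hT : T ⊆ K) : ∀ f ∈ conjOperators A T, K.subgroupOf A ≤ (K.subgroupOf A).comap f := by
  rw [forall_conjOperators_le_comap_iff, subgroupOf_map_subtype]
  calc closure T ≤ K := (closure_le K).2 hT
    _ ≤ normalizer (K : Set Γ) ⊓ normalizer (A : Set Γ) :=
      le_inf le_normalizer le_normalizer_of_normal
    _ ≤ normalizer (K ⊓ A : Subgroup Γ) := inf_normalizer_le_normalizer_inf

theorem closure_union_coe_image_eq {A H : Subgroup Γ} [A.Normal] {T : Set Γ} {Z : Set A}
    (hT : closure T ⊔ A ⊓ H = H)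
    (hZ : operatorClosure (conjOperators A T) Z = H.subgroupOf A) :
    closure (T ∪ (↑) '' Z) = H := by
  set K := closure (T ∪ ((↑) '' Z : Set Γ))
  have hTK : T ⊆ K := Set.subset_union_left.trans subset_closure
  have hZK : Z ⊆ K.subgroupOf A := fun z hz =>
    mem_subgroupOf.2 (subset_closure (.inr (Set.mem_image_of_mem _ hz)))
  have hZH : Z ⊆ H.subgroupOf A := hZ ▸ subset_operatorClosure _ _
  have hHK : H.subgroupOf A ≤ K.subgroupOf A :=
    hZ ▸ operatorClosure_le hZK (subgroupOf_le_comap_of_mem_conjOperators hTK)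
  apply le_antisymm
  · refine (closure_le H).2 (Set.union_subset ?_ (Set.image_subset_iff.2 hZH))
    exact (closure_le H).1 (le_sup_left.trans hT.le)
  · calc H = closure T ⊔ A ⊓ H := hT.symm
      _ ≤ K := sup_le ((closure_le K).2 hTK) fun a ha => hHK (x := ⟨a, ha.1⟩) ha.2

open scoped IsMulCommutative in
theorem operatorClosure_conjOperators_eq_top {A H : Subgroup Γ} [A.Normal] [IsMulCommutative A]
    {T : Set Γ} {Y : Set A} (hT : closure T ⊔ A ⊓ H = H)
    (hY : ∀ B : Subgroup Γ, (↑) '' Y ⊆ (B : Set Γ) → A ⊔ H ≤ normalizer (B : Set Γ) → A ≤ B) :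
    operatorClosure (conjOperators A T) Y = ⊤ := by
  set B := operatorClosure (conjOperators A T) Y
  have hAB : A ≤ normalizer (B.map A.subtype : Set Γ) := by
    simpa [CommGroup.normalizer_eq_top, ← MonoidHom.range_eq_map] using
      le_normalizer_map (H := B) A.subtype
  have hTB : closure T ≤ normalizer (B.map A.subtype : Set Γ) :=
    forall_conjOperators_le_comap_iff.1 fun f hf => operatorClosure_le_comap Y hf
  have hHB : A ⊔ H ≤ normalizer (B.map A.subtype : Set Γ) :=
    sup_le hAB (hT ▸ sup_le hTB (inf_le_left.trans hAB))
  have hABmap : A ≤ B.map A.subtype := hY _ (Set.image_mono (subset_operatorClosure _ _)) hHB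
  exact eq_top_iff.2 fun a _ => (mem_map_iff_mem A.subtype_injective).1 (hABmap a.2)

open scoped IsMulCommutative in
theorem rank_le_of_eq_normalClosure [Group.FG Γ] {A H : Subgroup Γ} [A.Normal]
    [IsMulCommutative A] [H.FiniteIndex] {X : Finset Γ} (hX : A = normalClosure X) :
    Group.rank H ≤ (A ⊔ H).index * Group.rank Γ + (A ⊔ H).index * X.card +
      (2 * ((A ⊔ H).index * Group.rank Γ) + 1) * Nat.log 2 (H.relIndex A) := by
  classical
  have : (A ⊔ H).FiniteIndex := finiteIndex_of_le (le_sup_right : H ≤ A ⊔ H)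
  obtain ⟨T, hTrank, hT⟩ := exists_finset_closure_sup_inf_eq A H
  have hTcard := hTrank.trans (rank_le_index_mul_rank (A ⊔ H))
  obtain ⟨S, hScard, hS⟩ := exists_finset_coe_eq_conjOperators A T
  obtain ⟨Y, hYcard, hYA, hY⟩ := exists_finset_normalClosure_le (A ⊔ H) X
  rw [← hX] at hYA hY
  lift Y to Finset A using hYA
  rw [Finset.card_image_of_injective _ Subtype.val_injective] at hYcard
  rw [Finset.coe_image] at hY
  obtain ⟨Z, hZcard, hZ⟩ := exists_finset_operatorClosure_eq S Y
    (hS ▸ operatorClosure_conjOperators_eq_top hT hY) (H.subgroupOf A) fun f hf =>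
      subgroupOf_le_comap_of_mem_conjOperators ((closure_le H).1 (le_sup_left.trans hT.le)) f
        (hS ▸ hf)
  have hgen : closure ((T ∪ Z.image (↑) : Finset Γ) : Set Γ) = H := by
    rw [Finset.coe_union, Finset.coe_image, closure_union_coe_image_eq hT (hS ▸ hZ)]
  calc Group.rank H = Group.rank (closure ((T ∪ Z.image (↑) : Finset Γ) : Set Γ)) :=
        rank_congr hgen.symm
    _ ≤ T.card + Z.card := (rank_closure_finset_le_card _).trans <|
        (Finset.card_union_le _ _).trans (Nat.add_le_add_left Finset.card_image_le _)
    _ ≤ T.card + (Y.card + (2 * T.card + 1) * Nat.log 2 (H.relIndex A)) := by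
        grw [hZcard, hScard]; rfl
    _ ≤ (A ⊔ H).index * Group.rank Γ + ((A ⊔ H).index * X.card +
          (2 * ((A ⊔ H).index * Group.rank Γ) + 1) * Nat.log 2 (H.relIndex A)) := by gcongr
    _ = _ := (add_assoc _ _ _).symm

end NormalSubgroup

section IndexGrowth

variable {ι G : Type*} [Group G] {l : Filter ι}

theorem tendsto_index_atTop [Infinite G] {H : ι → Subgroup G} (hfi : ∀ j, (H j).FiniteIndex)
    (hH : ∀ g ≠ 1, ∀ᶠ j in l, g ∉ H j) : Tendsto (fun j => (H j).index) l atTop := by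
  classical
  refine tendsto_atTop.2 fun n => ?_
  obtain ⟨F, rfl⟩ := Infinite.exists_subset_card_eq G n
  have hsep : ∀ᶠ j in l, ∀ p ∈ F.offDiag, p.1⁻¹ * p.2 ∉ H j :=
    (Filter.eventually_all_finset _).2 fun p hp =>
      hH _ (inv_mul_eq_one.not.2 (Finset.mem_offDiag.1 hp).2.2)
  filter_upwards [hsep] with j hj
  have hinj : Set.InjOn (QuotientGroup.mk : G → G ⧸ H j) F := fun x hx y hy hxy => by
    by_contra hne
    exact hj (x, y) (Finset.mem_offDiag.2 ⟨hx, hy, hne⟩) (QuotientGroup.eq.1 hxy)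
  let := (H j).fintypeQuotientOfFiniteIndex
  rw [index_eq_card, Nat.card_eq_fintype_card, ← Finset.card_univ]
  exact Finset.card_le_card_of_injOn _ (fun _ _ => Finset.mem_coe.2 (Finset.mem_univ _)) hinj

theorem eventually_notMem_of_iInf_eq_bot [Preorder ι] {H : ι → Subgroup G} (hanti : Antitone H)
    (hinf : ⨅ j, H j = ⊥) {g : G} (hg : g ≠ 1) : ∀ᶠ j in atTop, g ∉ H j := by
  have hgH : g ∉ ⨅ j, H j := by rwa [hinf, Subgroup.mem_bot]
  obtain ⟨i, hi⟩ : ∃ i, g ∉ H i := by simpa only [Subgroup.mem_iInf, not_forall] using hgH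
  exact (eventually_ge_atTop i).mono fun j hij hgj => hi (hanti hij hgj)

end IndexGrowth

theorem d_eq_rank (G : Type*) [Group G] [Group.FG G] : d G = Group.rank G := by
  obtain ⟨S, hcard, hS⟩ := Group.rank_spec G
  refine le_antisymm (Nat.sInf_le ⟨S, hcard, hS⟩) (le_csInf ⟨_, S, hcard, hS⟩ ?_)
  rintro _ ⟨T, rfl, hT⟩
  exact Group.rank_le hT

theorem tendsto_add_mul_logb_div_atTop (α β : ℝ) :
    Tendsto (fun b : ℕ => (α + β * Real.logb 2 b) / b) atTop (nhds 0) := by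
  have hlog : Tendsto (fun b : ℕ => Real.log b / b) atTop (nhds 0) :=
    Real.isLittleO_log_id_atTop.tendsto_div_nhds_zero.comp tendsto_natCast_atTop_atTop
  have hsum := (tendsto_const_div_atTop_nhds_zero_nat α).add (hlog.const_mul (β / Real.log 2))
  rw [mul_zero, add_zero] at hsum
  exact hsum.congr fun b => by rw [Real.logb]; ring

section RankGradient

variable {Γ : Type*} [Group Γ] [Group.FG Γ] {A H : Subgroup Γ} [A.Normal] [IsMulCommutative A]
  [H.FiniteIndex] {X : Finset Γ}

theorem d_le_of_eq_normalClosure (hX : A = normalClosure X) :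
    (d H : ℝ) ≤ (A ⊔ H).index * d Γ + (A ⊔ H).index * X.card +
      (2 * d Γ * (A ⊔ H).index + 1) * Real.logb 2 (H.relIndex A) := by
  have hlog : (Nat.log 2 (H.relIndex A) : ℝ) ≤ Real.logb 2 (H.relIndex A) :=
    mod_cast Real.natLog_le_logb (H.relIndex A) 2
  rw [d_eq_rank, d_eq_rank]
  calc (Group.rank H : ℝ) ≤ (A ⊔ H).index * Group.rank Γ + (A ⊔ H).index * X.card +
        (2 * ((A ⊔ H).index * Group.rank Γ) + 1) * Nat.log 2 (H.relIndex A) :=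
        mod_cast rank_le_of_eq_normalClosure hX
    _ ≤ (A ⊔ H).index * Group.rank Γ + (A ⊔ H).index * X.card +
        (2 * ((A ⊔ H).index * Group.rank Γ) + 1) * Real.logb 2 (H.relIndex A) := by gcongr
    _ = _ := by ring

theorem d_sub_one_div_index_le_of_eq_normalClosure (hX : A = normalClosure X) :
    ((d H : ℝ) - 1) / H.index ≤ (d Γ : ℝ) / H.relIndex A +
      (X.card + (2 * (d Γ : ℝ) + 1) * Real.logb 2 (H.relIndex A)) / H.relIndex A := by
  have : (A ⊔ H).FiniteIndex := finiteIndex_of_le (le_sup_right : H ≤ A ⊔ H)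
  have ha1 : (1 : ℝ) ≤ (A ⊔ H).index :=
    mod_cast Nat.one_le_iff_ne_zero.2 (A ⊔ H).index_ne_zero_of_finite
  have hb1 : (1 : ℝ) ≤ H.relIndex A :=
    mod_cast Nat.one_le_iff_ne_zero.2 (H.subgroupOf A).index_ne_zero_of_finite
  have hindex : (H.index : ℝ) = (A ⊔ H).index * H.relIndex A :=
    mod_cast (index_sup_mul_relIndex_of_normal A H).symm
  set a := ((A ⊔ H).index : ℝ)
  set b := (H.relIndex A : ℝ)
  have hlog : 0 ≤ Real.logb 2 b := Real.logb_nonneg one_lt_two hb1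
  have hd : (d H : ℝ) - 1 ≤ a * (d Γ + (X.card + (2 * d Γ + 1) * Real.logb 2 b)) := by
    calc (d H : ℝ) - 1 ≤ d H := sub_le_self _ zero_le_one
      _ ≤ a * d Γ + a * X.card + (2 * d Γ * a + 1) * Real.logb 2 b := d_le_of_eq_normalClosure hX
      _ ≤ a * d Γ + a * X.card + (2 * d Γ * a + a) * Real.logb 2 b := by gcongr
      _ = a * (d Γ + (X.card + (2 * d Γ + 1) * Real.logb 2 b)) := by ring
  calc ((d H : ℝ) - 1) / H.index
      ≤ a * (d Γ + (X.card + (2 * d Γ + 1) * Real.logb 2 b)) / (a * b) := by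
        rw [hindex]
        gcongr
    _ = (d Γ + (X.card + (2 * d Γ + 1) * Real.logb 2 b)) / b :=
        mul_div_mul_left _ _ (zero_lt_one.trans_le ha1).ne'
    _ = _ := add_div _ _ _

theorem rank_gradient_zero_of_abelian_normal_general {ι : Type*} {l : Filter ι} [Infinite A]
    (hX : A = normalClosure X) (Γc : ι → Subgroup Γ) (hfi : ∀ j, (Γc j).FiniteIndex)
    (hsep : ∀ g ≠ 1, ∀ᶠ j in l, g ∉ Γc j) :
    (∀ j, (d (Γc j) : ℝ) ≤ (A ⊔ Γc j).index * d Γ + (A ⊔ Γc j).index * X.card +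
      (2 * d Γ * (A ⊔ Γc j).index + 1) * Real.logb 2 ((Γc j).relIndex A)) ∧
    (∀ j, ((d (Γc j) : ℝ) - 1) / (Γc j).index ≤ (d Γ : ℝ) / (Γc j).relIndex A +
      (X.card + (2 * (d Γ : ℝ) + 1) * Real.logb 2 ((Γc j).relIndex A)) / (Γc j).relIndex A) ∧
    Tendsto (fun j => ((d (Γc j) : ℝ) - 1) / (Γc j).index) l (nhds 0) := by
  have hle (j : ι) := d_sub_one_div_index_le_of_eq_normalClosure (H := Γc j) hX
  have hrelIndex : Tendsto (fun j => (Γc j).relIndex A) l atTop :=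
    tendsto_index_atTop (fun j => inferInstance) fun a ha => hsep a (by simpa using ha)
  have hindex : Tendsto (fun j => (Γc j).index) l atTop := by
    have : Infinite Γ := .of_injective _ A.subtype_injective
    exact tendsto_index_atTop hfi hsep
  have hlower := (tendsto_const_div_atTop_nhds_zero_nat (-1 : ℝ)).comp hindex
  have hupper := (tendsto_add_mul_logb_div_atTop (d Γ + X.card) (2 * d Γ + 1)).comp hrelIndex
  refine ⟨fun j => d_le_of_eq_normalClosure hX, hle,
    tendsto_of_tendsto_of_tendsto_of_le_of_le hlower hupper (fun j => ?_) fun j => ?_⟩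
  · have hnum : (-1 : ℝ) ≤ d (Γc j) - 1 := neg_le_sub_iff_le_add.2 (by simp)
    exact div_le_div_of_nonneg_right hnum (Nat.cast_nonneg _)
  · exact (hle j).trans_eq (by rw [← add_div, ← add_assoc]; rfl)

end RankGradient

/-- Let `Γ` be a `d`-generated group with an infinite abelian normal subgroup `A`
which is the normal closure of a single element, and `(Γⱼ)` a chain of finite index
subgroups with trivial intersection. With `aⱼ = [Γ : AΓⱼ]` and `bⱼ = [A : A ∩ Γⱼ]`,
one has `d(Γⱼ) ≤ aⱼd + aⱼ + (2daⱼ+1)log₂ bⱼ`, hence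
`(d(Γⱼ)-1)/[Γ:Γⱼ] ≤ d/bⱼ + (1+(2d+1)log₂ bⱼ)/bⱼ`, and the rank gradient is `0`. -/
theorem rank_gradient_zero_of_abelian_normal {Γ : Type*} [Group Γ] [Group.FG Γ]
    (dn : ℕ) (hd : d Γ = dn)
    (A : Subgroup Γ) (hAnorm : A.Normal) (hAinf : Infinite A)
    (hAab : ∀ x y : A, x * y = y * x)
    (hAprin : ∃ x : Γ, A = Subgroup.normalClosure {x})
    (Γc : ℕ → Subgroup Γ) (hchain : ∀ j, Γc (j + 1) ≤ Γc j)
    (hfi : ∀ j, (Γc j).FiniteIndex) (hint : (⨅ j, Γc j) = ⊥) :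
    (∀ j, (d (Γc j) : ℝ) ≤ ((A ⊔ Γc j).index : ℝ) * dn + ((A ⊔ Γc j).index : ℝ) +
        (2 * dn * ((A ⊔ Γc j).index : ℝ) + 1) *
          Real.logb 2 (((Γc j).subgroupOf A).index)) ∧
    (∀ j, ((d (Γc j) : ℝ) - 1) / (Γc j).index ≤
        (dn : ℝ) / ((Γc j).subgroupOf A).index +
        (1 + (2 * (dn : ℝ) + 1) * Real.logb 2 (((Γc j).subgroupOf A).index)) /
          ((Γc j).subgroupOf A).index) ∧
    Tendsto (fun j => ((d (Γc j) : ℝ) - 1) / (Γc j).index) atTop (nhds 0) := by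
  have : IsMulCommutative A := ⟨⟨hAab⟩⟩
  obtain ⟨x, hx⟩ := hAprin
  subst hd
  have hsep (g : Γ) (hg : g ≠ 1) : ∀ᶠ j in atTop, g ∉ Γc j :=
    eventually_notMem_of_iInf_eq_bot (antitone_nat_of_succ_le hchain) hint hg
  simpa [relIndex] using
    rank_gradient_zero_of_abelian_normal_general (X := {x}) (by simpa using hx) Γc hfi hsep
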